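/- arXiv:2012.13155 — 5 statements merged into one kernel-verified Lean document; each statement's English description precedes it below -/
import Mathlib

section
/- Let A be a real m×n matrix, H a real m×p matrix, E a real q×n matrix, and F a real p×q matrix with F Fᵀ ⪯ I_p. Let X be a real symmetric positive definite n×n matrix and let α > 0 be a real scalar such that α⁻¹ I_q - E X Eᵀ is positive definite. Then (A + H F E) X (A + H F E)ᵀ ⪯ A (X⁻¹ - α Eᵀ E)⁻¹ Aᵀ + α⁻¹ H Hᵀ. -/
open Matrix

/-- Lemma 3.  For `F Fᵀ ⪯ I`, `X ≻ 0`, `α > 0` with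
`α⁻¹ I - E X Eᵀ ≻ 0`, one has
`(A + H F E) X (A + H F E)ᵀ ⪯ A (X⁻¹ - α Eᵀ E)⁻¹ Aᵀ + α⁻¹ H Hᵀ`. -/
theorem stmt1 {m n p q : ℕ}
    (A : Matrix (Fin m) (Fin n) ℝ) (H : Matrix (Fin m) (Fin p) ℝ)
    (E : Matrix (Fin q) (Fin n) ℝ) (F : Matrix (Fin p) (Fin q) ℝ)
    (hF : ((1 : Matrix (Fin p) (Fin p) ℝ) - F * Fᵀ).PosSemidef)
    (X : Matrix (Fin n) (Fin n) ℝ) (hX : X.PosDef)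
    (α : ℝ) (hα : 0 < α)
    (hE : (α⁻¹ • (1 : Matrix (Fin q) (Fin q) ℝ) - E * X * Eᵀ).PosDef) :
    ((A * (X⁻¹ - α • (Eᵀ * E))⁻¹ * Aᵀ + α⁻¹ • (H * Hᵀ))
      - (A + H * F * E) * X * (A + H * F * E)ᵀ).PosSemidef := by
  obtain ⟨W, hW⟩ : ∃ W, W = α⁻¹ • (1 : Matrix (Fin q) (Fin q) ℝ) - E * X * Eᵀ := ⟨_, rfl⟩
  rw [← hW] at hE
  have hα0 : α ≠ 0 := hα.ne'
  have hWu : IsUnit W.det := (Matrix.isUnit_iff_isUnit_det W).1 hE.isUnit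
  have hXu : IsUnit X.det := (Matrix.isUnit_iff_isUnit_det X).1 hX.isUnit
  have hWt : Wᵀ = W := by simpa using hE.isHermitian.eq
  have hXt : Xᵀ = X := by simpa using hX.isHermitian.eq
  obtain ⟨V, hV⟩ : ∃ V, V = W⁻¹ := ⟨_, rfl⟩
  have hVt : Vᵀ = V := by rw [hV, Matrix.transpose_nonsing_inv, hWt]
  have hWV : W * V = 1 := by rw [hV]; exact Matrix.mul_nonsing_inv W hWu
  have hVW : V * W = 1 := by rw [hV]; exact Matrix.nonsing_inv_mul W hWu
  have hXX : X⁻¹ * X = 1 := Matrix.nonsing_inv_mul X hXu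
  have tWV : ∀ {k : ℕ} (Z : Matrix (Fin q) (Fin k) ℝ), W * (V * Z) = Z := by
    intro k Z; rw [← Matrix.mul_assoc, hWV, Matrix.one_mul]
  have tVW : ∀ {k : ℕ} (Z : Matrix (Fin q) (Fin k) ℝ), V * (W * Z) = Z := by
    intro k Z; rw [← Matrix.mul_assoc, hVW, Matrix.one_mul]
  have tXX : ∀ {k : ℕ} (Z : Matrix (Fin n) (Fin k) ℝ), X⁻¹ * (X * Z) = Z := by
    intro k Z; rw [← Matrix.mul_assoc, hXX, Matrix.one_mul]
  have tE : ∀ {k : ℕ} (Z : Matrix (Fin q) (Fin k) ℝ),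
      E * (X * (Eᵀ * Z)) = α⁻¹ • Z - W * Z := by
    intro k Z
    have : E * X * Eᵀ = α⁻¹ • (1 : Matrix (Fin q) (Fin q) ℝ) - W := by rw [hW]; abel
    rw [← Matrix.mul_assoc, ← Matrix.mul_assoc, this, Matrix.sub_mul, Matrix.smul_mul,
      Matrix.one_mul]
  have hinv : (X⁻¹ - α • (Eᵀ * E))⁻¹ = X + X * Eᵀ * V * E * X := by
    apply Matrix.inv_eq_right_inv
    simp only [Matrix.sub_mul, Matrix.mul_add, Matrix.mul_sub, Matrix.smul_mul, Matrix.mul_smul,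
      Matrix.mul_assoc, hXX, tXX, tE, tWV, smul_sub, smul_smul, mul_inv_cancel₀ hα0, one_smul]
    abel
  have key : (A * (X⁻¹ - α • (Eᵀ * E))⁻¹ * Aᵀ + α⁻¹ • (H * Hᵀ))
      - (A + H * F * E) * X * (A + H * F * E)ᵀ
      = α⁻¹ • (H * (1 - F * Fᵀ) * Hᵀ)
        + (A * X * Eᵀ * V - H * F) * W * (A * X * Eᵀ * V - H * F)ᵀ := by
    rw [hinv]
    simp only [Matrix.transpose_add, Matrix.transpose_sub, Matrix.transpose_mul,
      Matrix.transpose_transpose, hVt, hXt, Matrix.add_mul, Matrix.sub_mul, Matrix.mul_add,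
      Matrix.mul_sub, Matrix.smul_mul, Matrix.mul_smul, Matrix.one_mul, Matrix.mul_one,
      Matrix.mul_assoc, tE, tWV, tVW, smul_sub]
    abel
  rw [key]
  have h1 := (hF.mul_mul_conjTranspose_same H).smul (inv_pos.2 hα).le
  have h2 := hE.posSemidef.mul_mul_conjTranspose_same (A * X * Eᵀ * V - H * F)
  rw [Matrix.conjTranspose_eq_transpose_of_trivial] at h1 h2
  exact h1.add h2
end

section
/- Let A₁ be a real n×n matrix, H₁ a real n×p matrix, E₁ a real q×n matrix, and F a real p×q matrix with F Fᵀ ⪯ I_p. Let B₁ be a real n×m matrix, G₁ a real n×s matrix, and let W (m×m) and R (s×s) be real symmetric positive semidefinite matrices. Let Σ̃ and Σ be real symmetric n×n matrices with Σ̃ ⪯ Σ and Σ positive definite, and let α > 0 be a real scalar such that α⁻¹ I_q - E₁ Σ E₁ᵀ is positive definite. Then (A₁ + H₁ F E₁) Σ̃ (A₁ + H₁ F E₁)ᵀ + B₁ W B₁ᵀ + G₁ R G₁ᵀ ⪯ A₁ Σ A₁ᵀ + α⁻¹ H₁ H₁ᵀ + A₁ Σ E₁ᵀ (α⁻¹ I_q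 - E₁ Σ E₁ᵀ)⁻¹ E₁ Σ A₁ᵀ + B₁ W B₁ᵀ + G₁ R G₁ᵀ. -/
open Matrix

/-- Theorem 2, filtering-step upper bound.  Under `F Fᵀ ⪯ I`,
`Σ̃ ⪯ Σ`, `Σ ≻ 0`, `α > 0` and `α⁻¹ I - E₁ Σ E₁ᵀ ≻ 0`,
`(A₁ + H₁FE₁) Σ̃ (A₁ + H₁FE₁)ᵀ + B₁WB₁ᵀ + G₁RG₁ᵀ
  ⪯ A₁ΣA₁ᵀ + α⁻¹H₁H₁ᵀ + A₁ΣE₁ᵀ(α⁻¹I - E₁ΣE₁ᵀ)⁻¹E₁ΣA₁ᵀ + B₁WB₁ᵀ + G₁RG₁ᵀ`. -/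
theorem stmt4 {n p q m s : ℕ}
    (A₁ : Matrix (Fin n) (Fin n) ℝ) (H₁ : Matrix (Fin n) (Fin p) ℝ)
    (E₁ : Matrix (Fin q) (Fin n) ℝ) (F : Matrix (Fin p) (Fin q) ℝ)
    (hF : ((1 : Matrix (Fin p) (Fin p) ℝ) - F * Fᵀ).PosSemidef)
    (B₁ : Matrix (Fin n) (Fin m) ℝ) (G₁ : Matrix (Fin n) (Fin s) ℝ)
    (W : Matrix (Fin m) (Fin m) ℝ) (hW : W.PosSemidef)
    (R : Matrix (Fin s) (Fin s) ℝ) (hR : R.PosSemidef)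
    (St S : Matrix (Fin n) (Fin n) ℝ) (hSt : St.IsSymm)
    (hle : (S - St).PosSemidef) (hS : S.PosDef)
    (α : ℝ) (hα : 0 < α)
    (hE : (α⁻¹ • (1 : Matrix (Fin q) (Fin q) ℝ) - E₁ * S * E₁ᵀ).PosDef) :
    ((A₁ * S * A₁ᵀ + α⁻¹ • (H₁ * H₁ᵀ)
        + A₁ * S * E₁ᵀ * (α⁻¹ • (1 : Matrix (Fin q) (Fin q) ℝ) - E₁ * S * E₁ᵀ)⁻¹
            * (E₁ * S * A₁ᵀ)
        + B₁ * W * B₁ᵀ + G₁ * R * G₁ᵀ)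
      - ((A₁ + H₁ * F * E₁) * St * (A₁ + H₁ * F * E₁)ᵀ
          + B₁ * W * B₁ᵀ + G₁ * R * G₁ᵀ)).PosSemidef := by
  have hST : Sᵀ = S := by simpa [Matrix.IsHermitian, conjTranspose_eq_transpose_of_trivial] using hS.1
  have h1 := hle.mul_mul_conjTranspose_same (A₁ + H₁ * F * E₁)
  have h2 := (hF.mul_mul_conjTranspose_same H₁).smul (inv_nonneg.mpr hα.le)
  obtain ⟨M, hM⟩ : ∃ M, M = α⁻¹ • (1 : Matrix (Fin q) (Fin q) ℝ) - E₁ * S * E₁ᵀ := ⟨_, rfl⟩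
  rw [← hM] at hE ⊢
  have hMT : Mᵀ = M := by simpa [Matrix.IsHermitian, conjTranspose_eq_transpose_of_trivial] using hE.1
  have hdet : IsUnit M.det := (Matrix.isUnit_iff_isUnit_det M).mp hE.isUnit
  have h3 := hE.posSemidef.mul_mul_conjTranspose_same (A₁ * S * E₁ᵀ * M⁻¹ - H₁ * F)
  have key : (A₁ * S * E₁ᵀ * M⁻¹ - H₁ * F) * M * (A₁ * S * E₁ᵀ * M⁻¹ - H₁ * F)ᵀ
      = A₁ * S * E₁ᵀ * M⁻¹ * (E₁ * S * A₁ᵀ) - A₁ * S * E₁ᵀ * (H₁ * F)ᵀ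
        - H₁ * F * (E₁ * S * A₁ᵀ) + H₁ * F * M * (H₁ * F)ᵀ := by
    have e1 : (A₁ * S * E₁ᵀ * M⁻¹ - H₁ * F) * M = A₁ * S * E₁ᵀ - H₁ * F * M := by
      rw [Matrix.sub_mul, Matrix.nonsing_inv_mul_cancel_right _ _ hdet]
    have e2 : (A₁ * S * E₁ᵀ * M⁻¹ - H₁ * F)ᵀ = M⁻¹ * (E₁ * S * A₁ᵀ) - (H₁ * F)ᵀ := by
      rw [Matrix.transpose_sub, Matrix.transpose_mul, Matrix.transpose_nonsing_inv, hMT]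
      simp only [Matrix.transpose_mul, Matrix.transpose_transpose, hST, Matrix.mul_assoc]
    have e3 : H₁ * F * M * (M⁻¹ * (E₁ * S * A₁ᵀ)) = H₁ * F * (E₁ * S * A₁ᵀ) := by
      rw [Matrix.mul_assoc (H₁ * F), Matrix.mul_nonsing_inv_cancel_left _ _ hdet]
    rw [e1, e2, Matrix.sub_mul, Matrix.mul_sub, Matrix.mul_sub, e3, ← Matrix.mul_assoc _ M⁻¹]
    abel
  rw [conjTranspose_eq_transpose_of_trivial] at h1 h2 h3
  rw [key] at h3
  convert (h1.add h2).add h3 using 1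
  have e4 : H₁ * F * M * (H₁ * F)ᵀ
      = α⁻¹ • (H₁ * (F * Fᵀ) * H₁ᵀ) - H₁ * F * (E₁ * S * E₁ᵀ) * (H₁ * F)ᵀ := by
    rw [hM]
    simp only [Matrix.mul_sub, Matrix.sub_mul, Matrix.mul_smul, Matrix.smul_mul, Matrix.mul_one,
      Matrix.transpose_mul, Matrix.mul_assoc]
  rw [e4]
  simp only [Matrix.mul_sub, Matrix.sub_mul, Matrix.mul_add, Matrix.add_mul, Matrix.mul_one,
    Matrix.transpose_add, Matrix.transpose_mul, Matrix.mul_assoc, smul_sub]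
  abel
end

section
/- Let A₂ be a real n×n matrix, H₂ a real n×p matrix, E₂ a real q×n matrix, and F a real p×q matrix with F Fᵀ ⪯ I_p. Let A_ϑ (ϑ = 1, …, ħ) be real n×n matrices and θ_ϑ ≥ 0 real scalars. Let B₂ be a real n×m matrix, G₂ a real n×s matrix, and let W (m×m) and R (s×s) be real symmetric positive semidefinite matrices. Let Σ̃ and Σ be real symmetric n×n matrices with Σ̃ ⪯ Σ and Σ positive definite, and let α > 0 be a real scalar such that α⁻¹ I_q - E₂ Σ E₂ᵀ is positive definite. Then (A₂ + H₂ F E₂) Σ̃ (A₂ + H₂ F E₂)ᵀ + Σ_{ϑ=1}^{ħ} θ_ϑ A_ϑ Σ̃ A_ϑᵀ + B₂ W B₂ᵀ + G₂ R G₂ᵀ ⪯ A₂ Σ A₂ᵀ + α⁻¹ H₂ H₂ᵀ + Σ_{ϑ=1}^{ħ} θ_ϑ A_ϑ Σ A_ϑᵀ + A₂ Σ E₂ᵀ (α⁻¹ I_q - E₂ Σ E₂ᵀ)⁻¹ E₂ Σ A₂ᵀ + B₂ W B₂ᵀ + G₂ R G₂ᵀ. -/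
open Matrix

/-- Theorem 2, one-step prediction upper bound, with multiplicative
noise channels `A_ϑ` of intensities `θ_ϑ`. -/
theorem stmt5 {n p q m s hbar : ℕ}
    (A₂ : Matrix (Fin n) (Fin n) ℝ) (H₂ : Matrix (Fin n) (Fin p) ℝ)
    (E₂ : Matrix (Fin q) (Fin n) ℝ) (F : Matrix (Fin p) (Fin q) ℝ)
    (hF : ((1 : Matrix (Fin p) (Fin p) ℝ) - F * Fᵀ).PosSemidef)
    (Aθ : Fin hbar → Matrix (Fin n) (Fin n) ℝ) (θ : Fin hbar → ℝ) (hθ : ∀ ϑ, 0 ≤ θ ϑ)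
    (B₂ : Matrix (Fin n) (Fin m) ℝ) (G₂ : Matrix (Fin n) (Fin s) ℝ)
    (W : Matrix (Fin m) (Fin m) ℝ) (hW : W.PosSemidef)
    (R : Matrix (Fin s) (Fin s) ℝ) (hR : R.PosSemidef)
    (St S : Matrix (Fin n) (Fin n) ℝ) (hSt : St.IsSymm)
    (hle : (S - St).PosSemidef) (hS : S.PosDef)
    (α : ℝ) (hα : 0 < α)
    (hE : (α⁻¹ • (1 : Matrix (Fin q) (Fin q) ℝ) - E₂ * S * E₂ᵀ).PosDef) :
    ((A₂ * S * A₂ᵀ + α⁻¹ • (H₂ * H₂ᵀ)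
        + (∑ ϑ, θ ϑ • (Aθ ϑ * S * (Aθ ϑ)ᵀ))
        + A₂ * S * E₂ᵀ * (α⁻¹ • (1 : Matrix (Fin q) (Fin q) ℝ) - E₂ * S * E₂ᵀ)⁻¹
            * (E₂ * S * A₂ᵀ)
        + B₂ * W * B₂ᵀ + G₂ * R * G₂ᵀ)
      - ((A₂ + H₂ * F * E₂) * St * (A₂ + H₂ * F * E₂)ᵀ
          + (∑ ϑ, θ ϑ • (Aθ ϑ * St * (Aθ ϑ)ᵀ))
          + B₂ * W * B₂ᵀ + G₂ * R * G₂ᵀ)).PosSemidef := by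
  have hMS := hE.posSemidef
  have hMT : (α⁻¹ • (1 : Matrix (Fin q) (Fin q) ℝ) - E₂ * S * E₂ᵀ)ᵀ
      = α⁻¹ • (1 : Matrix (Fin q) (Fin q) ℝ) - E₂ * S * E₂ᵀ := by
    simpa [IsHermitian, conjTranspose_eq_transpose_of_trivial] using hE.isHermitian
  have hST : Sᵀ = S := by
    simpa [IsHermitian, conjTranspose_eq_transpose_of_trivial] using hS.isHermitian
  have hu : IsUnit (α⁻¹ • (1 : Matrix (Fin q) (Fin q) ℝ) - E₂ * S * E₂ᵀ).det :=
    (Matrix.isUnit_iff_isUnit_det _).1 hE.isUnit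
  have hK : E₂ * S * E₂ᵀ = α⁻¹ • (1 : Matrix (Fin q) (Fin q) ℝ)
      - (α⁻¹ • (1 : Matrix (Fin q) (Fin q) ℝ) - E₂ * S * E₂ᵀ) := by abel
  generalize α⁻¹ • (1 : Matrix (Fin q) (Fin q) ℝ) - E₂ * S * E₂ᵀ = M at *
  have hMM : M * M⁻¹ = 1 := Matrix.mul_nonsing_inv _ hu
  have hMM' : M⁻¹ * M = 1 := Matrix.nonsing_inv_mul _ hu
  have hMiT : (M⁻¹)ᵀ = M⁻¹ := by rw [Matrix.transpose_nonsing_inv, hMT]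
  have h1 := hMS.mul_mul_conjTranspose_same (A₂ * S * E₂ᵀ * M⁻¹ - H₂ * F)
  have h2 := (hF.mul_mul_conjTranspose_same H₂).smul (inv_nonneg.2 hα.le)
  have h3 := hle.mul_mul_conjTranspose_same (A₂ + H₂ * F * E₂)
  have h4 : (∑ ϑ, θ ϑ • (Aθ ϑ * (S - St) * (Aθ ϑ)ᴴ)).PosSemidef :=
    Matrix.posSemidef_sum _ fun i _ => (hle.mul_mul_conjTranspose_same (Aθ i)).smul (hθ i)
  have h5 := ((h1.add h2).add h3).add h4
  simp only [conjTranspose_eq_transpose_of_trivial] at h5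
  have e4 : (∑ ϑ, θ ϑ • (Aθ ϑ * (S - St) * (Aθ ϑ)ᵀ))
      = (∑ ϑ, θ ϑ • (Aθ ϑ * S * (Aθ ϑ)ᵀ)) - ∑ ϑ, θ ϑ • (Aθ ϑ * St * (Aθ ϑ)ᵀ) := by
    rw [← Finset.sum_sub_distrib]
    refine Finset.sum_congr rfl fun i _ => ?_
    rw [Matrix.mul_sub, Matrix.sub_mul, smul_sub]
  have e1 : (A₂ * S * E₂ᵀ * M⁻¹ - H₂ * F) * M * (A₂ * S * E₂ᵀ * M⁻¹ - H₂ * F)ᵀ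
      = A₂ * S * E₂ᵀ * M⁻¹ * (E₂ * S * A₂ᵀ) - A₂ * S * E₂ᵀ * (H₂ * F)ᵀ
        - H₂ * F * (E₂ * S * A₂ᵀ) + H₂ * F * M * (H₂ * F)ᵀ := by
    have a : (A₂ * S * E₂ᵀ * M⁻¹ - H₂ * F) * M = A₂ * S * E₂ᵀ - H₂ * F * M := by
      rw [Matrix.sub_mul, Matrix.mul_assoc _ M⁻¹, hMM', Matrix.mul_one]
    have b : (A₂ * S * E₂ᵀ * M⁻¹ - H₂ * F)ᵀ = M⁻¹ * (E₂ * S * A₂ᵀ) - (H₂ * F)ᵀ := by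
      rw [transpose_sub, transpose_mul, hMiT, transpose_mul, transpose_mul, hST,
        transpose_transpose, Matrix.mul_assoc E₂]
    have c : H₂ * F * M * (M⁻¹ * (E₂ * S * A₂ᵀ)) = H₂ * F * (E₂ * S * A₂ᵀ) := by
      rw [← Matrix.mul_assoc, Matrix.mul_assoc _ M, hMM, Matrix.mul_one]
    rw [a, b, Matrix.sub_mul, Matrix.mul_sub, Matrix.mul_sub, c, ← Matrix.mul_assoc _ M⁻¹]
    abel
  have e2 : α⁻¹ • (H₂ * (1 - F * Fᵀ) * H₂ᵀ)
      = α⁻¹ • (H₂ * H₂ᵀ) - α⁻¹ • (H₂ * F * (H₂ * F)ᵀ) := by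
    rw [Matrix.mul_sub, Matrix.sub_mul, smul_sub, Matrix.mul_one, transpose_mul]
    simp only [Matrix.mul_assoc]
  have e3 : (A₂ + H₂ * F * E₂) * (S - St) * (A₂ + H₂ * F * E₂)ᵀ
      = A₂ * S * A₂ᵀ + A₂ * S * E₂ᵀ * (H₂ * F)ᵀ + H₂ * F * (E₂ * S * A₂ᵀ)
        + (α⁻¹ • (H₂ * F * (H₂ * F)ᵀ) - H₂ * F * M * (H₂ * F)ᵀ)
        - (A₂ + H₂ * F * E₂) * St * (A₂ + H₂ * F * E₂)ᵀ := by
    have d : α⁻¹ • (H₂ * F * (H₂ * F)ᵀ) - H₂ * F * M * (H₂ * F)ᵀ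
        = H₂ * F * (E₂ * S * E₂ᵀ) * (H₂ * F)ᵀ := by
      rw [hK, Matrix.mul_sub, Matrix.sub_mul, Matrix.mul_smul, Matrix.smul_mul, Matrix.mul_one]
    rw [d, Matrix.mul_sub, Matrix.sub_mul]
    congr 1
    rw [transpose_add, transpose_mul (H₂ * F) E₂]
    simp only [Matrix.add_mul, Matrix.mul_add, Matrix.mul_assoc]
    abel
  rw [e1, e2, e3, e4] at h5
  convert h5 using 1
  abel
end

section
/- Let r, L ≥ 1, let Π be a real symmetric positive definite rL×rL matrix regarded as an L×L array of r×r blocks Π^{i,j}, and let I₀ denote the rL×r matrix obtained by vertically stacking L copies of the r×r identity matrix I_r. Then for every i ∈ {1, …, L}, (I₀ᵀ Π⁻¹ I₀)⁻¹ ⪯ Π^{i,i}; that is, the fused error covariance is dominated in the Loewner order by each local (diagonal-block) error covariance. -/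
open Matrix

/-- The `rL × r` matrix obtained by vertically stacking `L` copies of the
`r × r` identity matrix. -/
def stackedId (L r : ℕ) : Matrix (Fin L × Fin r) (Fin r) ℝ :=
  Matrix.of fun p j => if p.2 = j then 1 else 0

/-- the fused error covariance is dominated by every local one.
For `Π ≻ 0` (an `L × L` array of `r × r` blocks `Π^{i,j}`),
`(I₀ᵀ Π⁻¹ I₀)⁻¹ ⪯ Π^{i,i}` for every `i`. -/
theorem stmt9 {r L : ℕ} (hr : 1 ≤ r) (hL : 1 ≤ L)
    (P : Matrix (Fin L × Fin r) (Fin L × Fin r) ℝ) (hP : P.PosDef) :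
    ∀ i : Fin L,
      ((Matrix.of fun a b : Fin r => P (i, a) (i, b))
        - ((stackedId L r)ᵀ * P⁻¹ * stackedId L r)⁻¹).PosSemidef := by
  intro i
  set S := stackedId L r with hS
  set E : Matrix (Fin L × Fin r) (Fin r) ℝ :=
    (1 : Matrix (Fin L × Fin r) (Fin L × Fin r) ℝ).submatrix id (fun a => (i, a)) with hE
  have hES : Eᵀ * S = 1 := by
    ext a b
    rw [Matrix.mul_apply, Finset.sum_eq_single (i, a)]
    · simp [hE, hS, stackedId, Matrix.one_apply]
    · intro j _ hj
      simp [hE, Matrix.one_apply, hj]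
    · simp
  have hSE : Sᵀ * E = 1 := by
    have h := congrArg Matrix.transpose hES
    simpa using h
  have hEPE : (Matrix.of fun a b : Fin r => P (i, a) (i, b)) = Eᵀ * P * E := by
    ext a b
    simp [hE, Matrix.mul_apply, Matrix.one_apply]
  have hinj : Function.Injective S.mulVec := by
    intro x y hxy
    have h := congrArg (fun v => Eᵀ *ᵥ v) hxy
    simpa [Matrix.mulVec_mulVec, hES] using h
  have hG : (Sᵀ * P⁻¹ * S).PosDef := by
    have h := hP.inv.conjTranspose_mul_mul_same hinj
    simpa [Matrix.conjTranspose_eq_transpose_of_trivial] using h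
  have hPt : Pᵀ = P := by
    simpa [Matrix.conjTranspose_eq_transpose_of_trivial] using hP.isHermitian.eq
  have hGt : (Sᵀ * P⁻¹ * S)ᵀ = Sᵀ * P⁻¹ * S := by
    simpa [Matrix.conjTranspose_eq_transpose_of_trivial] using hG.isHermitian.eq
  have hPu : IsUnit P.det := (Matrix.isUnit_iff_isUnit_det _).1 hP.isUnit
  have hGu : IsUnit (Sᵀ * P⁻¹ * S).det := (Matrix.isUnit_iff_isUnit_det _).1 hG.isUnit
  rw [hEPE]
  generalize hGdef : Sᵀ * P⁻¹ * S = G at *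
  have h1 : P * (P⁻¹ * S * G⁻¹) = S * G⁻¹ := by
    rw [Matrix.mul_assoc, Matrix.mul_nonsing_inv_cancel_left _ _ hPu]
  have h2 : (P⁻¹ * S * G⁻¹)ᵀ = G⁻¹ * (Sᵀ * P⁻¹) := by
    simp only [Matrix.transpose_mul, Matrix.transpose_nonsing_inv, hPt, hGt]
  have h3 : G⁻¹ * (Sᵀ * P⁻¹) * (P * E) = G⁻¹ := by
    rw [Matrix.mul_assoc, Matrix.mul_assoc Sᵀ, Matrix.nonsing_inv_mul_cancel_left _ _ hPu, hSE,
      Matrix.mul_one]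
  have h4 : G⁻¹ * (Sᵀ * P⁻¹) * (S * G⁻¹) = G⁻¹ := by
    rw [Matrix.mul_assoc, ← Matrix.mul_assoc (Sᵀ * P⁻¹), hGdef, Matrix.mul_nonsing_inv _ hGu,
      Matrix.mul_one]
  have h5 : Eᵀ * (S * G⁻¹) = G⁻¹ := by
    rw [← Matrix.mul_assoc, hES, Matrix.one_mul]
  have key : Eᵀ * P * E - G⁻¹ =
      (E - P⁻¹ * S * G⁻¹)ᴴ * P * (E - P⁻¹ * S * G⁻¹) := by
    rw [Matrix.conjTranspose_eq_transpose_of_trivial, Matrix.transpose_sub, h2, Matrix.mul_assoc _ P,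
      Matrix.mul_assoc _ P,
      Matrix.mul_sub P, h1, Matrix.sub_mul, Matrix.mul_sub, Matrix.mul_sub, h3, h4, h5]
    abel
  rw [key]
  exact hP.posSemidef.conjTranspose_mul_mul_same _
end

section
/- Let A be a real n×n matrix, 𝓕 a real n×p matrix, E a real q×n matrix, and F a real p×q matrix with F Fᵀ ⪯ I_p. Let A_ϑ (ϑ = 1, …, ħ) be real n×n matrices and θ_ϑ ≥ 0 real scalars. Let B be a real n×m matrix, G a real n×s matrix, and let W (m×m) and R (s×s) be real symmetric positive semidefinite matrices. Let P̃ and P be real symmetric n×n matrices with P̃ ⪯ P and P positive definite, and let α > 0 be a real scalar such that P⁻¹ - α Eᵀ E is positive definite. Then (A + 𝓕 F E) P̃ (A + 𝓕 F E)ᵀ + Σ_{ϑ=1}^{ħ} θ_ϑ A_ϑ P̃ A_ϑᵀ + B W Bᵀ + G R Gᵀ ⪯ A (P⁻¹ - α Eᵀ E)⁻¹ Aᵀ + α⁻¹ 𝓕 𝓕ᵀ + Σ_{ϑ=1}^{ħ} θ_ϑ A_ϑ P A_ϑᵀ + B W Bᵀ + G R Gᵀ. -/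
open Matrix

theorem key_aux {n q : ℕ}
    (A : Matrix (Fin n) (Fin n) ℝ) (L : Matrix (Fin n) (Fin q) ℝ)
    (E : Matrix (Fin q) (Fin n) ℝ) (P : Matrix (Fin n) (Fin n) ℝ) (hP : P.PosDef)
    (α : ℝ) (hα : 0 < α) (hE : (P⁻¹ - α • (Eᵀ * E)).PosDef) :
    (A * (P⁻¹ - α • (Eᵀ * E))⁻¹ * Aᵀ + α⁻¹ • (L * Lᵀ)
      - (A + L * E) * P * (A + L * E)ᵀ).PosSemidef := by
  obtain ⟨Q, hQ⟩ : ∃ Q, Q = P⁻¹ - α • (Eᵀ * E) := ⟨_, rfl⟩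
  rw [← hQ] at hE ⊢
  have hQu : IsUnit Q.det := (Matrix.isUnit_iff_isUnit_det _).1 hE.isUnit
  have hPu : IsUnit P.det := (Matrix.isUnit_iff_isUnit_det _).1 hP.isUnit
  have hSt : (Q⁻¹)ᵀ = Q⁻¹ := by simpa [Matrix.IsHermitian] using hE.inv.isHermitian
  have hPt : Pᵀ = P := by simpa [Matrix.IsHermitian] using hP.isHermitian
  have hSQ : Q⁻¹ * Q = 1 := Matrix.nonsing_inv_mul _ hQu
  have hQS : Q * Q⁻¹ = 1 := Matrix.mul_nonsing_inv _ hQu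
  have hPP : P * P⁻¹ * P = P := by rw [Matrix.mul_nonsing_inv _ hPu, Matrix.one_mul]
  have hPQP : P * Q * P = P - α • (P * Eᵀ * (E * P)) := by
    rw [hQ, Matrix.mul_sub, Matrix.sub_mul, hPP]
    simp [Matrix.mul_assoc]
  obtain ⟨C, hC⟩ : ∃ C, C = A + L * E := ⟨_, rfl⟩
  have hCt : Cᵀ = Aᵀ + Eᵀ * Lᵀ := by rw [hC]; simp
  have h1 := hE.posSemidef.mul_mul_conjTranspose_same (A * Q⁻¹ - C * P)
  have h2 := (Matrix.posSemidef_self_mul_conjTranspose (α⁻¹ • L - C * P * Eᵀ)).smul hα.le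
  have h3 := h1.add h2
  rw [← hC]
  convert h3 using 1
  have e1 : (A * Q⁻¹ - C * P) * Q * (A * Q⁻¹ - C * P)ᴴ
      = A * Q⁻¹ * Aᵀ - A * P * Cᵀ - C * P * Aᵀ + C * (P * Q * P) * Cᵀ := by
    have : (A * Q⁻¹ - C * P)ᴴ = Q⁻¹ * Aᵀ - P * Cᵀ := by
      simp [Matrix.conjTranspose_eq_transpose_of_trivial, hSt, hPt]
    rw [this, Matrix.sub_mul, Matrix.mul_assoc A, hSQ, Matrix.mul_one, Matrix.sub_mul,
      Matrix.mul_sub, Matrix.mul_sub]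
    have : C * P * Q * (Q⁻¹ * Aᵀ) = C * P * Aᵀ := by
      rw [Matrix.mul_assoc (C * P), ← Matrix.mul_assoc Q, hQS, Matrix.one_mul]
    rw [this]
    simp only [Matrix.mul_assoc]
    abel
  have e2 : α • ((α⁻¹ • L - C * P * Eᵀ) * (α⁻¹ • L - C * P * Eᵀ)ᴴ)
      = α⁻¹ • (L * Lᵀ) - L * E * P * Cᵀ - C * P * (Eᵀ * Lᵀ)
        + C * (α • (P * Eᵀ * (E * P))) * Cᵀ := by
    have : (α⁻¹ • L - C * P * Eᵀ)ᴴ = α⁻¹ • Lᵀ - E * P * Cᵀ := by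
      simp [Matrix.conjTranspose_eq_transpose_of_trivial, hPt, Matrix.mul_assoc]
    rw [this]
    simp only [Matrix.sub_mul, Matrix.mul_sub, Matrix.smul_mul, Matrix.mul_smul, smul_sub,
      smul_smul, Matrix.mul_assoc, mul_inv_cancel₀ hα.ne', one_smul,
      mul_inv_cancel_left₀ hα.ne']
    abel
  rw [e1, e2, hPQP]
  have e3 : A * P * Cᵀ + L * E * P * Cᵀ = C * P * Cᵀ := by
    rw [← Matrix.add_mul, ← Matrix.add_mul, ← hC]
  have e4 : C * P * Aᵀ + C * P * (Eᵀ * Lᵀ) = C * P * Cᵀ := by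
    rw [← Matrix.mul_add, ← hCt]
  rw [Matrix.mul_sub C, Matrix.sub_mul]
  rw [eq_sub_of_add_eq e3, eq_sub_of_add_eq e4]
  abel

/-- recursive upper bound for the state second-moment matrix.
Under `F Fᵀ ⪯ I`, `P̃ ⪯ P`, `P ≻ 0`, `α > 0` and `P⁻¹ - α Eᵀ E ≻ 0`,
`(A + 𝓕FE) P̃ (A + 𝓕FE)ᵀ + Σ_ϑ θ_ϑ A_ϑ P̃ A_ϑᵀ + BWBᵀ + GRGᵀ
  ⪯ A (P⁻¹ - αEᵀE)⁻¹ Aᵀ + α⁻¹ 𝓕𝓕ᵀ + Σ_ϑ θ_ϑ A_ϑ P A_ϑᵀ + BWBᵀ + GRGᵀ`. -/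
theorem stmt15 {n p q m s hbar : ℕ}
    (A : Matrix (Fin n) (Fin n) ℝ) (𝓕 : Matrix (Fin n) (Fin p) ℝ)
    (E : Matrix (Fin q) (Fin n) ℝ) (F : Matrix (Fin p) (Fin q) ℝ)
    (hF : ((1 : Matrix (Fin p) (Fin p) ℝ) - F * Fᵀ).PosSemidef)
    (Aθ : Fin hbar → Matrix (Fin n) (Fin n) ℝ) (θ : Fin hbar → ℝ) (hθ : ∀ ϑ, 0 ≤ θ ϑ)
    (B : Matrix (Fin n) (Fin m) ℝ) (G : Matrix (Fin n) (Fin s) ℝ)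
    (W : Matrix (Fin m) (Fin m) ℝ) (hW : W.PosSemidef)
    (R : Matrix (Fin s) (Fin s) ℝ) (hR : R.PosSemidef)
    (Pt P : Matrix (Fin n) (Fin n) ℝ) (hPt : Pt.IsSymm)
    (hle : (P - Pt).PosSemidef) (hP : P.PosDef)
    (α : ℝ) (hα : 0 < α)
    (hE : (P⁻¹ - α • (Eᵀ * E)).PosDef) :
    ((A * (P⁻¹ - α • (Eᵀ * E))⁻¹ * Aᵀ + α⁻¹ • (𝓕 * 𝓕ᵀ)
        + (∑ ϑ, θ ϑ • (Aθ ϑ * P * (Aθ ϑ)ᵀ))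
        + B * W * Bᵀ + G * R * Gᵀ)
      - ((A + 𝓕 * F * E) * Pt * (A + 𝓕 * F * E)ᵀ
          + (∑ ϑ, θ ϑ • (Aθ ϑ * Pt * (Aθ ϑ)ᵀ))
          + B * W * Bᵀ + G * R * Gᵀ)).PosSemidef := by
  have k1 := key_aux A (𝓕 * F) E P hP α hα hE
  have k2 := (hF.mul_mul_conjTranspose_same 𝓕).smul (inv_pos.2 hα).le
  have k3 := hle.mul_mul_conjTranspose_same (A + 𝓕 * F * E)
  have k4 : (∑ ϑ, θ ϑ • (Aθ ϑ * (P - Pt) * (Aθ ϑ)ᴴ)).PosSemidef :=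
    Matrix.posSemidef_sum _ fun ϑ _ => (hle.mul_mul_conjTranspose_same (Aθ ϑ)).smul (hθ ϑ)
  convert ((k1.add k2).add k3).add k4 using 1
  simp only [Matrix.conjTranspose_eq_transpose_of_trivial]
  have e4 : ∑ ϑ, θ ϑ • (Aθ ϑ * (P - Pt) * (Aθ ϑ)ᵀ)
      = ∑ ϑ, θ ϑ • (Aθ ϑ * P * (Aθ ϑ)ᵀ) - ∑ ϑ, θ ϑ • (Aθ ϑ * Pt * (Aθ ϑ)ᵀ) := by
    simp only [Matrix.mul_sub, Matrix.sub_mul, smul_sub, Finset.sum_sub_distrib]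
  have e2 : 𝓕 * (1 - F * Fᵀ) * 𝓕ᵀ = 𝓕 * 𝓕ᵀ - 𝓕 * F * (𝓕 * F)ᵀ := by
    simp only [Matrix.mul_sub, Matrix.sub_mul, Matrix.mul_one, Matrix.transpose_mul,
      Matrix.mul_assoc]
  rw [e4, e2, smul_sub, Matrix.mul_sub (A + 𝓕 * F * E), Matrix.sub_mul]
  abel
end
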